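/- arXiv:2411.19293 — 2 statements merged into one kernel-verified Lean document; each statement's English description precedes it below -/
import Mathlib

section
/- Regularized Kato inequality for the Frobenius norm: let u = (u_1,…,u_n): ℝⁿ → (n×n real matrices)ⁿ be twice continuously differentiable and, for ε > 0, set u_ε(y) = √(‖u(y)‖_F² + ε²), where ‖u‖_F² = Σ_j ‖u_j‖_F². Then at every point of ℝⁿ, Δu_ε ≥ ⟨u, Δu⟩_F / u_ε + (1/n)·Σ_{i,j} ‖[∂_i u_j, u_j]‖_F² / u_ε³, where Δ acts componentwise on u, Δu_ε is the Euclidean Laplacian of the scalar function u_ε, and ⟨u, Δu⟩_F = Σ_j ⟨u_j, Δu_j⟩_F. -/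
open scoped BigOperators

noncomputable section

/-- Euclidean space `ℝⁿ`. -/
abbrev En (n : ℕ) := EuclideanSpace ℝ (Fin n)

/-- `n × n` real matrices, represented entrywise. -/
abbrev Mat (n : ℕ) := Fin n → Fin n → ℝ

variable {n : ℕ}

/-- Frobenius inner product `⟨A,B⟩_F = tr(AᵀB) = Σ_{μν} A_{μν} B_{μν}`. -/
def fipE (A B : Mat n) : ℝ := ∑ μ, ∑ ν, A μ ν * B μ ν

/-- Frobenius norm. -/
def fnormE (A : Mat n) : ℝ := Real.sqrt (fipE A A)

/-- Matrix commutator `[A, B] = AB − BA`, entrywise. -/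
def brkt (A B : Mat n) : Mat n := fun μ ν => ∑ k, (A μ k * B k ν - B μ k * A k ν)

/-- `A` is skew-symmetric. -/
def skewM (A : Mat n) : Prop := ∀ μ ν, A ν μ = -A μ ν

/-- Partial derivative `∂_i f` of a scalar function on `ℝⁿ`. -/
def pder (i : Fin n) (f : En n → ℝ) (y : En n) : ℝ :=
  fderiv ℝ f y (EuclideanSpace.single i 1)

/-- Euclidean Laplacian `Δf = Σ_i ∂_i ∂_i f` of a scalar function on `ℝⁿ`. -/
def lapS (f : En n → ℝ) (y : En n) : ℝ := ∑ i, pder i (fun z => pder i f z) y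

/-- Componentwise partial derivative `∂_i u` of a matrix-valued function on `ℝⁿ`. -/
def pderM (i : Fin n) (u : En n → Mat n) (y : En n) : Mat n :=
  fun μ ν => pder i (fun z => u z μ ν) y

/-- Componentwise Laplacian `Δu` of a matrix-valued function on `ℝⁿ`. -/
def lapM (u : En n → Mat n) (y : En n) : Mat n := fun μ ν => lapS (fun z => u z μ ν) y

/-- The constant `a = √(n−2)/(2√2)`. -/
def aC (n : ℕ) : ℝ := Real.sqrt ((n : ℝ) - 2) / (2 * Real.sqrt 2)

/-- The constant `b = (1/2)(6n − 12 − (n+2)√(2n−4))`. -/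
def bC (n : ℕ) : ℝ := (1 / 2) * (6 * (n : ℝ) - 12 - ((n : ℝ) + 2) * Real.sqrt (2 * (n : ℝ) - 4))

/-- `σ_i(y)`, the skew matrix with entries `(σ_i(y))^μ_ν = δ_{iν} y^μ − δ_{iμ} y^ν`. -/
def sigmaM (i : Fin n) (y : En n) : Mat n :=
  fun μ ν => (if i = ν then y μ else 0) - (if i = μ then y ν else 0)

/-- The soliton connection `W_i(y) = σ_i(y)/(a|y|² + b)`. -/
def Wc (i : Fin n) (y : En n) : Mat n :=
  fun μ ν => sigmaM i y μ ν / (aC n * ‖y‖ ^ 2 + bC n)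

/-- The curvature `F_{ij} = ∂_i W_j − ∂_j W_i + [W_i, W_j]` of the soliton connection `W`. -/
def Fc (i j : Fin n) (y : En n) : Mat n :=
  pderM i (Wc j) y - pderM j (Wc i) y + brkt (Wc i y) (Wc j y)

/-- The linearized operator `L` of the rescaled Yang–Mills de Turck flow at the soliton `W`:
`(Lu)_j = Δu_j − (1/2)Σ_i y_i ∂_i u_j − (1/2)u_j + 2Σ_i [W_i, ∂_i u_j]
  + Σ_i [W_i, [W_i, u_j]] + 2Σ_i [u_i, F_{ij}]`. -/
def Lop (u : En n → Fin n → Mat n) (y : En n) (j : Fin n) : Mat n :=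
  lapM (fun z => u z j) y
    - (1 / 2 : ℝ) • (∑ i, y i • pderM i (fun z => u z j) y)
    - (1 / 2 : ℝ) • u y j
    + (2 : ℝ) • ∑ i, brkt (Wc i y) (pderM i (fun z => u z j) y)
    + ∑ i, brkt (Wc i y) (brkt (Wc i y) (u y j))
    + (2 : ℝ) • ∑ i, brkt (u y i) (Fc i j y)

/-- Squared Frobenius norm of a tuple of matrices: `‖u‖_F² = Σ_j ‖u_j‖_F²`. -/
def tnormSq (v : Fin n → Mat n) : ℝ := ∑ j, fipE (v j) (v j)

/-- The Gaussian weight `ρ(y) = e^{−|y|²/4}`. -/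
def gauss (y : En n) : ℝ := Real.exp (-‖y‖ ^ 2 / 4)

end

/-!
Let `s² = ‖u‖² + ε²`. Differentiating both sides twice in a direction `v` gives
`s ∂ᵥ²s = ⟨u, ∂ᵥ²u⟩ + (‖∂ᵥu‖² s² - ⟨u, ∂ᵥu⟩²) / s²`, and the last numerator is at least the Gram
determinant `‖∂ᵥu‖²‖u‖² - ⟨∂ᵥu, u⟩²`. Pairing a matrix `C` with `[A, B]` is a skew bilinear form in
`(A, B)` of squared Hilbert–Schmidt norm `2n‖C‖² - 2 (tr C)²`, and a skew form is controlled by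
Gram determinants, so `‖[A, B]‖² ≤ n (‖A‖²‖B‖² - ⟨A, B⟩²)`. Finally, Gram determinants are
superadditive under orthogonal direct sums, which extends this bound to tuples of matrices.
-/

section GramDeterminants

variable {R ι : Type*} [CommRing R]

theorem sum_sum_mul_sub_mul_sq [Fintype ι] (x y : ι → R) :
    ∑ a, ∑ b, (x a * y b - y a * x b) ^ 2 = 2 * ((x ⬝ᵥ x) * (y ⬝ᵥ y) - (x ⬝ᵥ y) ^ 2) := by
  have expand (a b : ι) : (x a * y b - y a * x b) ^ 2 =
      (x a * x a) * (y b * y b) + (y a * y a) * (x b * x b) - 2 * ((x a * y a) * (x b * y b)) := by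
    ring
  simp only [expand, Finset.sum_add_distrib, Finset.sum_sub_distrib, ← Finset.mul_sum,
    ← Finset.sum_mul, dotProduct]
  ring

variable [LinearOrder R] [IsStrictOrderedRing R]

theorem two_mul_sq_skew_form_le [Fintype ι] {ω : ι → ι → R} (hω : ∀ a b, ω b a = -ω a b)
    (x y : ι → R) :
    2 * (∑ a, ∑ b, ω a b * (x a * y b)) ^ 2 ≤
      (∑ a, ∑ b, ω a b ^ 2) * ((x ⬝ᵥ x) * (y ⬝ᵥ y) - (x ⬝ᵥ y) ^ 2) := by
  have swap : ∑ a, ∑ b, ω a b * (y a * x b) = -∑ a, ∑ b, ω a b * (x a * y b) := by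
    rw [Finset.sum_comm]
    simp only [← Finset.sum_neg_distrib]
    refine Finset.sum_congr rfl fun a _ => Finset.sum_congr rfl fun b _ => ?_
    rw [hω a b]
    ring
  have antisymmetrize : ∑ a, ∑ b, ω a b * (x a * y b - y a * x b) =
      2 * ∑ a, ∑ b, ω a b * (x a * y b) := by
    simp only [mul_sub, Finset.sum_sub_distrib, swap]
    ring
  have cauchy_schwarz : (∑ a, ∑ b, ω a b * (x a * y b - y a * x b)) ^ 2 ≤
      (∑ a, ∑ b, ω a b ^ 2) * ∑ a, ∑ b, (x a * y b - y a * x b) ^ 2 := by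
    simpa only [Fintype.sum_prod_type] using Finset.sum_mul_sq_le_sq_mul_sq Finset.univ
      (fun p : ι × ι => ω p.1 p.2) (fun p => x p.1 * y p.2 - y p.1 * x p.2)
  rw [antisymmetrize, sum_sum_mul_sub_mul_sq] at cauchy_schwarz
  linarith

theorem two_mul_mul_le_of_sq_le_mul {p q r t c d : R} (hp : 0 ≤ p) (hq : 0 ≤ q) (hr : 0 ≤ r)
    (ht : 0 ≤ t) (hc : c ^ 2 ≤ p * q) (hd : d ^ 2 ≤ r * t) : 2 * (c * d) ≤ p * t + r * q := by
  refine le_of_abs_le (abs_le_of_sq_le_sq ?_ (by positivity))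
  calc (2 * (c * d)) ^ 2 = 4 * (c ^ 2 * d ^ 2) := by ring
    _ ≤ 4 * ((p * q) * (r * t)) := by gcongr
    _ ≤ (p * t + r * q) ^ 2 := by linarith [sq_nonneg (p * t - r * q)]

theorem sum_mul_sub_sq_le (s : Finset ι) {p q c : ι → R} (hp : ∀ j ∈ s, 0 ≤ p j)
    (hq : ∀ j ∈ s, 0 ≤ q j) (hc : ∀ j ∈ s, c j ^ 2 ≤ p j * q j) :
    ∑ j ∈ s, (p j * q j - c j ^ 2) ≤ (∑ j ∈ s, p j) * (∑ j ∈ s, q j) - (∑ j ∈ s, c j) ^ 2 := by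
  induction s using Finset.cons_induction with
  | empty => simp
  | cons j s hj ih =>
    rw [Finset.forall_mem_cons] at hp hq hc
    have cross : 2 * (c j * ∑ k ∈ s, c k) ≤ p j * ∑ k ∈ s, q k + (∑ k ∈ s, p k) * q j :=
      two_mul_mul_le_of_sq_le_mul hp.1 hq.1 (Finset.sum_nonneg hp.2) (Finset.sum_nonneg hq.2)
        hc.1 (Finset.sum_sq_le_sum_mul_sum_of_sq_le_mul s hp.2 hq.2 hc.2)
    simp only [Finset.sum_cons]
    linarith [ih hp.2 hq.2 hc.2]

end GramDeterminants

section Frobenius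

variable {R ι m : Type*} [CommRing R]

/-- The skew bilinear form on matrices representing `(A, B) ↦ ⟨C, [A, B]⟩_F`, by its coefficients
in the basis of matrix units. -/
def commutatorForm [DecidableEq m] (C : Matrix m m R) (p q : m × m) : R :=
  (if p.2 = q.1 then C p.1 q.2 else 0) - (if q.2 = p.1 then C q.1 p.2 else 0)

theorem commutatorForm_swap [DecidableEq m] (C : Matrix m m R) (p q : m × m) :
    commutatorForm C q p = -commutatorForm C p q := by
  simp only [commutatorForm, neg_sub]

variable [Fintype m]

/-- The Frobenius inner product of square matrices indexed by any finite type, over any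
commutative ring; for real `n × n` matrices it unfolds to `fipE`. -/
def frobInner (A B : Matrix m m R) : R := ∑ μ, ∑ ν, A μ ν * B μ ν

/-- The Frobenius inner product of finite tuples of square matrices; `tnormSq v` unfolds to
`tupleInner v v`. -/
def tupleInner [Fintype ι] (U V : ι → Matrix m m R) : R := ∑ j, frobInner (U j) (V j)

theorem tupleInner_comm [Fintype ι] (U V : ι → Matrix m m R) : tupleInner U V = tupleInner V U := by
  simp only [tupleInner, frobInner, mul_comm]

theorem frobInner_eq_dotProduct (A B : Matrix m m R) :
    frobInner A B = Function.uncurry A ⬝ᵥ Function.uncurry B := by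
  simp only [frobInner, dotProduct, Fintype.sum_prod_type, Function.uncurry]

theorem sum_commutatorForm_mul [DecidableEq m] (A B C : Matrix m m R) :
    ∑ p, ∑ q, commutatorForm C p q * (Function.uncurry A p * Function.uncurry B q) =
      frobInner C ⁅A, B⁆ := by
  have mul_term : ∑ μ, ∑ k, ∑ ν, C μ ν * (A μ k * B k ν) = ∑ μ, ∑ ν, C μ ν * (A * B) μ ν := by
    simp only [Matrix.mul_apply, Finset.mul_sum]
    exact Finset.sum_congr rfl fun μ _ => Finset.sum_comm
  have mul_swap_term :
      ∑ μ, ∑ k, ∑ l, C l k * (A μ k * B l μ) = ∑ l, ∑ k, C l k * (B * A) l k := by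
    simp only [Matrix.mul_apply, Finset.mul_sum, mul_comm (B _ _)]
    rw [Finset.sum_comm_cycle]
    exact Finset.sum_congr rfl fun l _ => Finset.sum_comm
  simp only [commutatorForm, frobInner, Ring.lie_def, Matrix.sub_apply, Fintype.sum_prod_type,
    Function.uncurry, sub_mul, mul_sub, Finset.sum_sub_distrib, ite_mul, zero_mul,
    Finset.sum_ite_irrel, Finset.sum_const_zero, Finset.sum_ite_eq, Finset.sum_ite_eq',
    Finset.mem_univ, if_true, mul_term, mul_swap_term]

theorem sum_commutatorForm_sq [DecidableEq m] (C : Matrix m m R) :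
    ∑ p, ∑ q, commutatorForm C p q ^ 2 =
      2 * (Fintype.card m * frobInner C C) - 2 * C.trace ^ 2 := by
  have expand (p q : m × m) : commutatorForm C p q ^ 2 =
      (if p.2 = q.1 then C p.1 q.2 * C p.1 q.2 else 0) +
        (if q.2 = p.1 then C q.1 p.2 * C q.1 p.2 else 0) -
        2 * (if p.2 = q.1 then if q.2 = p.1 then C p.1 q.2 * C q.1 p.2 else 0 else 0) := by
    unfold commutatorForm
    split_ifs <;> ring
  have diagonal : ∑ μ, C μ μ * ∑ k, C k k = C.trace ^ 2 := by
    rw [← Finset.sum_mul, sq]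
    rfl
  have direct : ∑ k, ∑ l, C k l * C k l = frobInner C C := rfl
  have transposed : ∑ k, ∑ l, C l k * C l k = frobInner C C := Finset.sum_comm
  simp only [expand, Fintype.sum_prod_type, Finset.sum_sub_distrib, Finset.sum_add_distrib,
    ← Finset.mul_sum, Finset.sum_ite_irrel, Finset.sum_const_zero, Finset.sum_ite_eq,
    Finset.sum_ite_eq', Finset.mem_univ, if_true, diagonal, direct, transposed, Finset.sum_const,
    Finset.card_univ, nsmul_eq_mul]
  ring

variable [LinearOrder R] [IsStrictOrderedRing R]

theorem frobInner_self_nonneg (A : Matrix m m R) : 0 ≤ frobInner A A :=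
  Finset.sum_nonneg fun _ _ => Finset.sum_nonneg fun _ _ => mul_self_nonneg _

theorem frobInner_sq_le (A B : Matrix m m R) :
    frobInner A B ^ 2 ≤ frobInner A A * frobInner B B := by
  simpa only [frobInner_eq_dotProduct, dotProduct, ← sq] using
    Finset.sum_mul_sq_le_sq_mul_sq Finset.univ (Function.uncurry A) (Function.uncurry B)

theorem frobInner_lie_sq_le (A B C : Matrix m m R) :
    frobInner C ⁅A, B⁆ ^ 2 ≤ Fintype.card m * frobInner C C *
      (frobInner A A * frobInner B B - frobInner A B ^ 2) := by
  classical
  have skew_bound := two_mul_sq_skew_form_le (commutatorForm_swap C)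
    (Function.uncurry A) (Function.uncurry B)
  rw [sum_commutatorForm_mul, sum_commutatorForm_sq] at skew_bound
  simp only [← frobInner_eq_dotProduct] at skew_bound
  have trace_term := mul_nonneg (sq_nonneg C.trace) (sub_nonneg.2 (frobInner_sq_le A B))
  linarith

theorem frobInner_lie_self_le (A B : Matrix m m R) :
    frobInner ⁅A, B⁆ ⁅A, B⁆ ≤
      Fintype.card m * (frobInner A A * frobInner B B - frobInner A B ^ 2) := by
  rcases (frobInner_self_nonneg ⁅A, B⁆).eq_or_lt with h_zero | h_pos
  · rw [← h_zero]
    exact mul_nonneg (Nat.cast_nonneg _) (sub_nonneg.2 (frobInner_sq_le A B))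
  · refine le_of_mul_le_mul_left ?_ h_pos
    linarith [frobInner_lie_sq_le A B ⁅A, B⁆]

variable [Fintype ι]

theorem tupleInner_self_nonneg (U : ι → Matrix m m R) : 0 ≤ tupleInner U U :=
  Finset.sum_nonneg fun j _ => frobInner_self_nonneg (U j)

theorem tupleInner_sq_le (U V : ι → Matrix m m R) :
    tupleInner U V ^ 2 ≤ tupleInner U U * tupleInner V V :=
  Finset.sum_sq_le_sum_mul_sum_of_sq_le_mul _ (fun j _ => frobInner_self_nonneg (U j))
    (fun j _ => frobInner_self_nonneg (V j)) fun j _ => frobInner_sq_le (U j) (V j)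

theorem tupleInner_lie_self_le (U V : ι → Matrix m m R) :
    tupleInner ⁅U, V⁆ ⁅U, V⁆ ≤
      Fintype.card m * (tupleInner U U * tupleInner V V - tupleInner U V ^ 2) :=
  calc tupleInner ⁅U, V⁆ ⁅U, V⁆
      ≤ ∑ j, Fintype.card m *
          (frobInner (U j) (U j) * frobInner (V j) (V j) - frobInner (U j) (V j) ^ 2) :=
        Finset.sum_le_sum fun j _ => frobInner_lie_self_le (U j) (V j)
    _ ≤ _ := by
        rw [← Finset.mul_sum]
        gcongr
        exact sum_mul_sub_sq_le _ (fun j _ => frobInner_self_nonneg (U j))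
          (fun j _ => frobInner_self_nonneg (V j)) fun j _ => frobInner_sq_le (U j) (V j)

end Frobenius

section SecondDerivatives

open scoped RealInnerProductSpace

variable {E F : Type*} [NormedAddCommGroup E] [NormedSpace ℝ E]

/-- The second directional derivative `∂ᵥ∂ᵥ f`; for `v` a coordinate vector it unfolds to an
iterated `pder`. -/
noncomputable def secondDirDeriv [NormedAddCommGroup F] [NormedSpace ℝ F] (v : E) (f : E → F)
    (x : E) : F :=
  fderiv ℝ (fun z => fderiv ℝ f z v) x v

theorem differentiableAt_fderiv_apply [NormedAddCommGroup F] [NormedSpace ℝ F]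
    {f : E → F} {x : E} (hf : ContDiffAt ℝ 2 f x) (v : E) :
    DifferentiableAt ℝ (fun z => fderiv ℝ f z v) x :=
  ((hf.fderiv_right (m := 1) (by norm_num)).differentiableAt one_ne_zero).clm_apply
    (differentiableAt_const v)

theorem eventually_differentiableAt_of_contDiffAt [NormedAddCommGroup F] [NormedSpace ℝ F]
    {f : E → F} {x : E} (hf : ContDiffAt ℝ 1 f x) : ∀ᶠ z in nhds x, DifferentiableAt ℝ f z :=
  (hf.eventually (by simp)).mono fun _ hz => hz.differentiableAt one_ne_zero

theorem secondDirDeriv_congr [NormedAddCommGroup F] [NormedSpace ℝ F] {f g : E → F} {x : E}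
    (h : f =ᶠ[nhds x] g) (v : E) : secondDirDeriv v f x = secondDirDeriv v g x := by
  have := (h.fderiv (𝕜 := ℝ)).fun_comp (· v)
  exact DFunLike.congr_fun this.fderiv_eq v

variable [NormedAddCommGroup F] [InnerProductSpace ℝ F]

theorem fderiv_norm_sq_comp_apply {f : E → F} {x : E} (hf : DifferentiableAt ℝ f x) (v : E) :
    fderiv ℝ (fun z => ‖f z‖ ^ 2) x v = 2 * ⟪f x, fderiv ℝ f x v⟫ := by
  simp [hf.hasFDerivAt.norm_sq.fderiv]

theorem secondDirDeriv_norm_sq {f : E → F} {x : E} (hf : ContDiffAt ℝ 2 f x) (v : E) :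
    secondDirDeriv v (fun z => ‖f z‖ ^ 2) x =
      2 * (⟪f x, secondDirDeriv v f x⟫ + ‖fderiv ℝ f x v‖ ^ 2) := by
  have first : (fun z => fderiv ℝ (fun z => ‖f z‖ ^ 2) z v) =ᶠ[nhds x]
      fun z => 2 * ⟪f z, fderiv ℝ f z v⟫ :=
    (eventually_differentiableAt_of_contDiffAt (hf.of_le one_le_two)).mono
      fun z hz => fderiv_norm_sq_comp_apply hz v
  have hf' := differentiableAt_fderiv_apply hf v
  have hf₁ := hf.differentiableAt two_ne_zero
  rw [secondDirDeriv, first.fderiv_eq, fderiv_const_mul (hf₁.inner ℝ hf')]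
  simp [fderiv_inner_apply ℝ hf₁ hf', secondDirDeriv]

theorem secondDirDeriv_sqrt_norm_sq_add {f : E → F} {x : E} {c : ℝ} (hf : ContDiffAt ℝ 2 f x)
    (hpos : 0 < ‖f x‖ ^ 2 + c) (v : E) :
    secondDirDeriv v (fun z => √(‖f z‖ ^ 2 + c)) x =
      ⟪f x, secondDirDeriv v f x⟫ / √(‖f x‖ ^ 2 + c) +
        (‖fderiv ℝ f x v‖ ^ 2 * (‖f x‖ ^ 2 + c) - ⟪f x, fderiv ℝ f x v⟫ ^ 2) /
          √(‖f x‖ ^ 2 + c) ^ 3 := by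
  let s : E → ℝ := fun z => √(‖f z‖ ^ 2 + c)
  have s_contDiff : ContDiffAt ℝ 2 s x :=
    ((hf.norm_sq ℝ).add contDiffAt_const).sqrt hpos.ne'
  have s_pos : 0 < s x := Real.sqrt_pos.2 hpos
  have s_sq : (fun z => ‖s z‖ ^ 2) =ᶠ[nhds x] fun z => ‖f z‖ ^ 2 + c := by
    filter_upwards [(((hf.norm_sq ℝ).add contDiffAt_const).continuousAt).eventually
      (lt_mem_nhds hpos)] with z hz
    rw [Real.norm_eq_abs, sq_abs, Real.sq_sqrt hz.le]
  have first_order : s x * fderiv ℝ s x v = ⟪f x, fderiv ℝ f x v⟫ := by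
    have h : 2 * ⟪s x, fderiv ℝ s x v⟫ = 2 * ⟪f x, fderiv ℝ f x v⟫ := by
      rw [← fderiv_norm_sq_comp_apply (s_contDiff.differentiableAt two_ne_zero),
        ← fderiv_norm_sq_comp_apply (hf.differentiableAt two_ne_zero), s_sq.fderiv_eq,
        fderiv_add_const]
    linarith [Real.inner_apply (s x) (fderiv ℝ s x v)]
  have second_order : s x * secondDirDeriv v s x + fderiv ℝ s x v ^ 2 =
      ⟪f x, secondDirDeriv v f x⟫ + ‖fderiv ℝ f x v‖ ^ 2 := by
    have h : 2 * (⟪s x, secondDirDeriv v s x⟫ + ‖fderiv ℝ s x v‖ ^ 2) =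
        2 * (⟪f x, secondDirDeriv v f x⟫ + ‖fderiv ℝ f x v‖ ^ 2) := by
      rw [← secondDirDeriv_norm_sq s_contDiff, ← secondDirDeriv_norm_sq hf,
        secondDirDeriv_congr s_sq]
      simp only [secondDirDeriv, fderiv_add_const]
    rw [Real.norm_eq_abs, sq_abs] at h
    linarith [Real.inner_apply (s x) (secondDirDeriv v s x)]
  have s_sq_self : s x ^ 2 = ‖f x‖ ^ 2 + c := Real.sq_sqrt hpos.le
  change secondDirDeriv v s x = _ / s x + _ / s x ^ 3
  rw [← first_order, ← s_sq_self]
  field_simp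
  linear_combination second_order

end SecondDerivatives

section Tuples

open scoped RealInnerProductSpace

variable {E ι m : Type*} [NormedAddCommGroup E] [NormedSpace ℝ E]

/-- The entrywise directional derivative `∂ᵥ u` of a tuple of matrices; for `v` a coordinate vector
its components unfold to `pderM`. -/
noncomputable def tupleDeriv (v : E) (u : E → ι → Matrix m m ℝ) (x : E) : ι → Matrix m m ℝ :=
  fun j => Matrix.of fun μ ν => fderiv ℝ (fun z => u z j μ ν) x v

variable {u : E → ι → Matrix m m ℝ} {x : E}

/-- The vector of all entries of a tuple of matrices, in the Euclidean space whose inner product is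
`tupleInner`. -/
def tupleVec (U : ι → Matrix m m ℝ) : EuclideanSpace ℝ (ι × m × m) :=
  WithLp.toLp 2 fun p => U p.1 p.2.1 p.2.2

theorem fderiv_tupleVec_apply [Finite ι] [Finite m]
    (hu : ∀ j μ ν, DifferentiableAt ℝ (fun z => u z j μ ν) x) (v : E) :
    fderiv ℝ (fun z => tupleVec (u z)) x v = tupleVec (tupleDeriv v u x) := by
  cases nonempty_fintype ι
  cases nonempty_fintype m
  have hd : DifferentiableAt ℝ (fun z => tupleVec (u z)) x :=
    differentiableAt_euclidean.2 fun (p : ι × m × m) => hu p.1 p.2.1 p.2.2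
  ext p
  have h := (EuclideanSpace.proj (𝕜 := ℝ) p).hasFDerivAt.comp x hd.hasFDerivAt
  exact (DFunLike.congr_fun h.fderiv v).symm

variable [Fintype ι] [Fintype m]

theorem inner_tupleVec (U V : ι → Matrix m m ℝ) : ⟪tupleVec U, tupleVec V⟫ = tupleInner U V := by
  simp [tupleVec, tupleInner, frobInner, PiLp.inner_apply, Fintype.sum_prod_type, mul_comm]

theorem tupleInner_sum {κ : Type*} (s : Finset κ) (U : ι → Matrix m m ℝ)
    (V : κ → ι → Matrix m m ℝ) : tupleInner U (∑ i ∈ s, V i) = ∑ i ∈ s, tupleInner U (V i) := by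
  have tupleVec_sum : tupleVec (∑ i ∈ s, V i) = ∑ i ∈ s, tupleVec (V i) := by
    ext p
    simp [tupleVec, Matrix.sum_apply]
  simp only [← inner_tupleVec, tupleVec_sum, inner_sum]

theorem norm_tupleVec_sq (U : ι → Matrix m m ℝ) : ‖tupleVec U‖ ^ 2 = tupleInner U U := by
  rw [← real_inner_self_eq_norm_sq, inner_tupleVec]

theorem secondDirDeriv_tupleVec (hu : ∀ j μ ν, ContDiffAt ℝ 2 (fun z => u z j μ ν) x) (v : E) :
    secondDirDeriv v (fun z => tupleVec (u z)) x =
      tupleVec (tupleDeriv v (tupleDeriv v u) x) := by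
  have h : (fun z => fderiv ℝ (fun z => tupleVec (u z)) z v) =ᶠ[nhds x]
      fun z => tupleVec (tupleDeriv v u z) := by
    have hu' : ∀ᶠ z in nhds x, ∀ j μ ν, DifferentiableAt ℝ (fun z => u z j μ ν) z := by
      simp only [Filter.eventually_all]
      exact fun j μ ν => eventually_differentiableAt_of_contDiffAt ((hu j μ ν).of_le one_le_two)
    exact hu'.mono fun z hz => fderiv_tupleVec_apply hz v
  rw [secondDirDeriv, h.fderiv_eq]
  exact fderiv_tupleVec_apply (fun j μ ν => differentiableAt_fderiv_apply (hu j μ ν) v) v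

theorem contDiffAt_tupleVec (hu : ∀ j μ ν, ContDiffAt ℝ 2 (fun z => u z j μ ν) x) :
    ContDiffAt ℝ 2 (fun z => tupleVec (u z)) x :=
  contDiffAt_euclidean.2 fun (p : ι × m × m) => hu p.1 p.2.1 p.2.2

end Tuples

section Kato

variable {E κ ι m : Type*} [NormedAddCommGroup E] [NormedSpace ℝ E] [Fintype κ] [Fintype ι]
  [Fintype m]

theorem le_secondDirDeriv_sqrt_tupleInner_self_add {u : E → ι → Matrix m m ℝ} {y : E} {c : ℝ}
    (hu : ∀ j μ ν, ContDiffAt ℝ 2 (fun z => u z j μ ν) y) (hc : 0 ≤ c)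
    (hpos : 0 < tupleInner (u y) (u y) + c) (v : E) :
    tupleInner (u y) (tupleDeriv v (tupleDeriv v u) y) / √(tupleInner (u y) (u y) + c) +
        (Fintype.card m : ℝ)⁻¹ * tupleInner ⁅tupleDeriv v u y, u y⁆ ⁅tupleDeriv v u y, u y⁆ /
          √(tupleInner (u y) (u y) + c) ^ 3 ≤
      secondDirDeriv v (fun z => √(tupleInner (u z) (u z) + c)) y := by
  have identity := secondDirDeriv_sqrt_norm_sq_add (contDiffAt_tupleVec hu) (c := c)
    (by rwa [norm_tupleVec_sq]) v
  rw [secondDirDeriv_tupleVec hu,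
    fderiv_tupleVec_apply fun j μ ν => (hu j μ ν).differentiableAt two_ne_zero] at identity
  simp only [norm_tupleVec_sq, inner_tupleVec] at identity
  have gram_bound : (Fintype.card m : ℝ)⁻¹ *
      tupleInner ⁅tupleDeriv v u y, u y⁆ ⁅tupleDeriv v u y, u y⁆ ≤
        tupleInner (tupleDeriv v u y) (tupleDeriv v u y) * tupleInner (u y) (u y) -
          tupleInner (tupleDeriv v u y) (u y) ^ 2 :=
    inv_mul_le_of_le_mul₀ (Nat.cast_nonneg _) (sub_nonneg.2 (tupleInner_sq_le _ _))
      (tupleInner_lie_self_le _ _)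
  rw [identity, tupleInner_comm (u y) (tupleDeriv v u y)]
  gcongr
  linarith [mul_nonneg (tupleInner_self_nonneg (tupleDeriv v u y)) hc]

/-- For an orthonormal basis `e` the operator `∑ i, ∂ₑᵢ²` is the Laplacian; `ε = 0` gives the
unregularized Kato inequality away from the zeros of `u`. -/
theorem regularized_kato_inequality_general (e : κ → E) {u : E → ι → Matrix m m ℝ} {y : E} {ε : ℝ}
    (hu : ∀ j μ ν, ContDiffAt ℝ 2 (fun z => u z j μ ν) y)
    (hpos : 0 < tupleInner (u y) (u y) + ε ^ 2) :
    ∑ i, secondDirDeriv (e i) (fun z => √(tupleInner (u z) (u z) + ε ^ 2)) y ≥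
      tupleInner (u y) (∑ i, tupleDeriv (e i) (tupleDeriv (e i) u) y) /
          √(tupleInner (u y) (u y) + ε ^ 2) +
        (Fintype.card m : ℝ)⁻¹ *
            (∑ i, tupleInner ⁅tupleDeriv (e i) u y, u y⁆ ⁅tupleDeriv (e i) u y, u y⁆) /
          √(tupleInner (u y) (u y) + ε ^ 2) ^ 3 := by
  rw [ge_iff_le, tupleInner_sum, Finset.sum_div, Finset.mul_sum, Finset.sum_div,
    ← Finset.sum_add_distrib]
  exact Finset.sum_le_sum fun i _ =>
    le_secondDirDeriv_sqrt_tupleInner_self_add hu (sq_nonneg ε) hpos (e i)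

end Kato

theorem contDiffAt_entry {E ι m : Type*} [NormedAddCommGroup E] [NormedSpace ℝ E] [Fintype ι]
    [Fintype m] {u : E → ι → m → m → ℝ} {y : E} (hu : ContDiffAt ℝ 2 u y) (j : ι) (μ ν : m) :
    ContDiffAt ℝ 2 (fun z => u z j μ ν) y :=
  contDiffAt_pi.1 (contDiffAt_pi.1 (contDiffAt_pi.1 hu j) μ) ν

theorem brkt_eq_lie {n : ℕ} (A B : Mat n) : brkt A B = ⁅Matrix.of A, Matrix.of B⁆ := by
  ext μ ν
  simp [brkt, Ring.lie_def, Matrix.mul_apply]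

theorem lapM_eq_sum_tupleDeriv {n : ℕ} (u : En n → Fin n → Mat n) (y : En n) :
    (fun j => lapM (fun z => u z j) y) =
      ∑ i, tupleDeriv (EuclideanSpace.single i 1) (tupleDeriv (EuclideanSpace.single i 1) u) y := by
  ext j μ ν
  simp only [Finset.sum_apply, Matrix.sum_apply]
  rfl

/-- Regularized Kato inequality for the Frobenius norm: for a `C²` map
`u = (u_1,…,u_n) : ℝⁿ → Matₙ(ℝ)ⁿ` and `ε > 0`, setting `u_ε(y) = √(‖u(y)‖_F² + ε²)`,
at every point `Δu_ε ≥ ⟨u, Δu⟩_F/u_ε + (1/n)·Σ_{i,j}‖[∂_i u_j, u_j]‖_F²/u_ε³`. -/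
theorem regularized_kato_inequality (n : ℕ) (u : En n → Fin n → Mat n)
    (hu : ContDiff ℝ 2 u) (ε : ℝ) (hε : 0 < ε) (y : En n) :
    lapS (fun z => Real.sqrt (tnormSq (u z) + ε ^ 2)) y ≥
      (∑ j, fipE (u y j) (lapM (fun z => u z j) y)) / Real.sqrt (tnormSq (u y) + ε ^ 2)
      + (n : ℝ)⁻¹ *
          (∑ i, ∑ j, fipE (brkt (pderM i (fun z => u z j) y) (u y j))
            (brkt (pderM i (fun z => u z j) y) (u y j)))
          / Real.sqrt (tnormSq (u y) + ε ^ 2) ^ 3 := by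
  have general := regularized_kato_inequality_general (EuclideanSpace.single · 1)
    (contDiffAt_entry (hu.contDiffAt (x := y)))
    (add_pos_of_nonneg_of_pos (tupleInner_self_nonneg _) (pow_pos hε 2))
  rw [← lapM_eq_sum_tupleDeriv, Fintype.card_fin] at general
  simp only [brkt_eq_lie]
  exact general
end

section
/- For every R > 0, the curvature component F_{23} of the soliton connection W evaluated at the point −R·e₁ (where e₁ is the first standard basis vector of ℝⁿ) has Frobenius norm ‖F_{23}(−R e₁)‖_F = √2·((2a − 1)R² + 2b)/(aR² + b)². -/
open scoped BigOperators

/-!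
Write `u ∧ v = u vᵀ − v uᵀ`, so that `σ_i(y) = y ∧ e_i`. The product rule and the commutator
relations of `so(n)` turn the curvature of `φ(y) (y ∧ e_i)` into a combination of `e_i ∧ e_j`,
`y ∧ e_i` and `y ∧ e_j`. For radial `φ` the coefficients of the last two carry the factors `y_j`
and `y_i`, so where `y_i = y_j = 0` only `(2φ − |y|²φ²) e_i ∧ e_j` survives, and `e_i ∧ e_j` has
Frobenius norm `√2`. In terms of `s = √(2n − 4)` the constants are `a = s / 4` and
`b = s (s − 2) (4 − s) / 4`; for `4 < n < 10` we have `2 < s < 4`, hence `2a > 1` and `b > 0`.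
-/

section

variable {n : ℕ}

lemma brkt_smul_smul (c d : ℝ) (A B : Mat n) :
    brkt (c • A) (d • B) = (c * d) • brkt A B := by
  ext μ ν
  simp only [brkt, Pi.smul_apply, smul_eq_mul, Finset.mul_sum]
  exact Finset.sum_congr rfl fun k _ => by ring

lemma fnormE_smul (c : ℝ) (A : Mat n) : fnormE (c • A) = |c| * fnormE A := by
  have hsq : fipE (c • A) (c • A) = c ^ 2 * fipE A A := by
    simp only [fipE, Pi.smul_apply, smul_eq_mul, Finset.mul_sum]
    exact Finset.sum_congr rfl fun μ _ => Finset.sum_congr rfl fun ν _ => by ring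
  rw [fnormE, fnormE, hsq, Real.sqrt_mul (sq_nonneg c), Real.sqrt_sq_eq_abs]

/-- The skew-symmetric matrix `u ∧ v = u vᵀ − v uᵀ`, encoded entrywise as in `Mat`. It makes the
commutator and Frobenius inner product of the matrices `σ_i(y)` expressible by inner products. -/
def wedge (u v : En n) : Mat n := fun μ ν => u μ * v ν - v μ * u ν

lemma wedge_self (u : En n) : wedge u u = 0 := by
  ext μ ν
  simp [wedge]

lemma wedge_swap (u v : En n) : wedge v u = -wedge u v := by
  ext μ ν
  simp [wedge]

lemma sigmaM_eq_wedge (i : Fin n) (y : En n) :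
    sigmaM i y = wedge y (EuclideanSpace.single i 1) := by
  ext μ ν
  simp [sigmaM, wedge, eq_comm]

lemma brkt_wedge_wedge (u v x y : En n) :
    brkt (wedge u v) (wedge x y)
      = inner ℝ v x • wedge u y - inner ℝ v y • wedge u x
        - inner ℝ u x • wedge v y + inner ℝ u y • wedge v x := by
  ext μ ν
  simp only [brkt, wedge, PiLp.inner_apply, RCLike.inner_apply, conj_trivial, Pi.add_apply,
    Pi.sub_apply, Pi.smul_apply, smul_eq_mul, Finset.sum_mul, ← Finset.sum_add_distrib,
    ← Finset.sum_sub_distrib]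
  exact Finset.sum_congr rfl fun k _ => by ring

lemma fipE_wedge_wedge (u v x y : En n) :
    fipE (wedge u v) (wedge x y)
      = 2 * (inner ℝ u x * inner ℝ v y - inner ℝ u y * inner ℝ v x) := by
  have hexpand (μ ν : Fin n) : wedge u v μ ν * wedge x y μ ν
      = (u μ * x μ) * (v ν * y ν) - (u μ * y μ) * (v ν * x ν)
        - (v μ * x μ) * (u ν * y ν) + (v μ * y μ) * (u ν * x ν) := by
    simp only [wedge]
    ring
  simp only [fipE, hexpand, Finset.sum_add_distrib, Finset.sum_sub_distrib, ← Finset.sum_mul_sum,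
    PiLp.inner_apply, RCLike.inner_apply, conj_trivial, mul_comm (x _), mul_comm (y _)]
  ring

lemma fnormE_wedge_single {i j : Fin n} (hij : i ≠ j) :
    fnormE (wedge (EuclideanSpace.single i 1) (EuclideanSpace.single j 1)) = Real.sqrt 2 := by
  simp [fnormE, fipE_wedge_wedge, EuclideanSpace.inner_single_left, hij]

lemma pder_const_mul_norm_sq_add_const_inv {a b : ℝ} {y : En n} (hD : a * ‖y‖ ^ 2 + b ≠ 0)
    (i : Fin n) :
    pder i (fun z => (a * ‖z‖ ^ 2 + b)⁻¹) y = -(2 * a * y i) / (a * ‖y‖ ^ 2 + b) ^ 2 := by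
  have hinv : HasFDerivAt (fun z : En n => (a * ‖z‖ ^ 2 + b)⁻¹)
      (-((a * ‖y‖ ^ 2 + b) ^ 2)⁻¹ • a • 2 • innerSL ℝ y) y :=
    (hasDerivAt_inv hD).comp_hasFDerivAt y
      (((hasStrictFDerivAt_norm_sq y).hasFDerivAt.const_mul a).add_const b)
  rw [pder, hinv.fderiv]
  simp only [neg_smul, neg_apply, smul_apply, coe_innerSL_apply,
    EuclideanSpace.inner_single_right, conj_trivial, one_mul, nsmul_eq_mul, Nat.cast_ofNat,
    smul_eq_mul]
  ring

lemma pderM_smul_wedge {φ : En n → ℝ} {y : En n} (hφ : DifferentiableAt ℝ φ y)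
    (i : Fin n) (v : En n) :
    pderM i (fun z => φ z • wedge z v) y
      = pder i φ y • wedge y v + φ y • wedge (EuclideanSpace.single i 1) v := by
  ext μ ν
  have hcoord (k : Fin n) :
      HasFDerivAt (fun z : En n => z k) (EuclideanSpace.proj k : En n →L[ℝ] ℝ) y :=
    (EuclideanSpace.proj k : En n →L[ℝ] ℝ).hasFDerivAt
  have hmul : HasFDerivAt (fun z => (φ z • wedge z v) μ ν)
      (φ y • (v ν • (EuclideanSpace.proj μ : En n →L[ℝ] ℝ) - v μ • EuclideanSpace.proj ν)
        + wedge y v μ ν • fderiv ℝ φ y) y :=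
    hφ.hasFDerivAt.mul (((hcoord μ).mul_const (v ν)).sub ((hcoord ν).const_mul (v μ)))
  rw [pderM, pder, hmul.fderiv]
  simp only [wedge, add_apply, smul_apply, sub_apply, PiLp.proj_apply, smul_eq_mul, pder,
    Pi.add_apply, Pi.smul_apply]
  ring

lemma curvature_smul_wedge_single {φ : En n → ℝ} {y : En n} (hφ : DifferentiableAt ℝ φ y)
    (i j : Fin n) :
    pderM i (fun z => φ z • wedge z (EuclideanSpace.single j 1)) y
        - pderM j (fun z => φ z • wedge z (EuclideanSpace.single i 1)) y
        + brkt (φ y • wedge y (EuclideanSpace.single i 1))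
          (φ y • wedge y (EuclideanSpace.single j 1))
      = (pder i φ y + φ y ^ 2 * y i) • wedge y (EuclideanSpace.single j 1)
        - (pder j φ y + φ y ^ 2 * y j) • wedge y (EuclideanSpace.single i 1)
        + (2 * φ y - ‖y‖ ^ 2 * φ y ^ 2)
          • wedge (EuclideanSpace.single i 1) (EuclideanSpace.single j 1) := by
  rw [pderM_smul_wedge hφ, pderM_smul_wedge hφ, brkt_smul_smul, brkt_wedge_wedge, wedge_self,
    wedge_swap y, wedge_swap (EuclideanSpace.single i 1) (EuclideanSpace.single j 1)]
  simp only [EuclideanSpace.inner_single_left, EuclideanSpace.inner_single_right,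
    real_inner_self_eq_norm_sq, map_one, conj_trivial, one_mul]
  module

lemma Wc_eq_smul_wedge (i : Fin n) :
    Wc i = fun y => (aC n * ‖y‖ ^ 2 + bC n)⁻¹ • wedge y (EuclideanSpace.single i 1) := by
  ext y μ ν
  simp only [Wc, sigmaM_eq_wedge, Pi.smul_apply, smul_eq_mul]
  ring

lemma Fc_eq {y : En n} (hD : aC n * ‖y‖ ^ 2 + bC n ≠ 0) (i j : Fin n) :
    Fc i j y = (((2 * aC n - 1) * ‖y‖ ^ 2 + 2 * bC n) / (aC n * ‖y‖ ^ 2 + bC n) ^ 2)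
          • wedge (EuclideanSpace.single i 1) (EuclideanSpace.single j 1)
        - ((2 * aC n - 1) / (aC n * ‖y‖ ^ 2 + bC n) ^ 2)
          • (y i • wedge y (EuclideanSpace.single j 1)
            - y j • wedge y (EuclideanSpace.single i 1)) := by
  have hφ : DifferentiableAt ℝ (fun z : En n => (aC n * ‖z‖ ^ 2 + bC n)⁻¹) y :=
    (((hasStrictFDerivAt_norm_sq y).differentiableAt.const_mul _).add_const _).inv hD
  have hcoeff : 2 * (aC n * ‖y‖ ^ 2 + bC n)⁻¹ - ‖y‖ ^ 2 * (aC n * ‖y‖ ^ 2 + bC n)⁻¹ ^ 2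
      = ((2 * aC n - 1) * ‖y‖ ^ 2 + 2 * bC n) / (aC n * ‖y‖ ^ 2 + bC n) ^ 2 := by
    field_simp
    ring
  rw [Fc, Wc_eq_smul_wedge, Wc_eq_smul_wedge, curvature_smul_wedge_single hφ,
    pder_const_mul_norm_sq_add_const_inv hD, pder_const_mul_norm_sq_add_const_inv hD, hcoeff,
    inv_pow]
  module

lemma aC_eq : aC n = Real.sqrt (2 * (n : ℝ) - 4) / 4 := by
  have hsqrt : Real.sqrt (2 * (n : ℝ) - 4) = Real.sqrt 2 * Real.sqrt ((n : ℝ) - 2) := by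
    rw [← Real.sqrt_mul zero_le_two]
    ring_nf
  rw [aC, hsqrt, div_eq_div_iff (by positivity) four_ne_zero]
  linear_combination (-2 * Real.sqrt ((n : ℝ) - 2)) * Real.mul_self_sqrt (zero_le_two (α := ℝ))

lemma bC_eq (hn : 2 ≤ n) :
    bC n = Real.sqrt (2 * (n : ℝ) - 4) * (Real.sqrt (2 * (n : ℝ) - 4) - 2)
      * (4 - Real.sqrt (2 * (n : ℝ) - 4)) / 4 := by
  have hn' : (2 : ℝ) ≤ n := by exact_mod_cast hn
  have hsq := Real.sq_sqrt (show 0 ≤ 2 * (n : ℝ) - 4 by linarith)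
  rw [bC]
  linear_combination (Real.sqrt (2 * (n : ℝ) - 4) / 4 - 3 / 2) * hsq

lemma one_le_two_mul_aC (hn : 4 ≤ n) : 1 ≤ 2 * aC n := by
  have hn' : (4 : ℝ) ≤ n := by exact_mod_cast hn
  have hsqrt : 2 ≤ Real.sqrt (2 * (n : ℝ) - 4) := Real.le_sqrt_of_sq_le (by linarith)
  rw [aC_eq]
  linarith

lemma bC_pos (hn : 4 < n) (hn' : n < 10) : 0 < bC n := by
  have h4 : (4 : ℝ) < n := by exact_mod_cast hn
  have h10 : (n : ℝ) < 10 := by exact_mod_cast hn'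
  have hlower : 0 < Real.sqrt (2 * (n : ℝ) - 4) - 2 :=
    sub_pos.2 (Real.lt_sqrt_of_sq_lt (by linarith))
  have hupper : 0 < 4 - Real.sqrt (2 * (n : ℝ) - 4) :=
    sub_pos.2 ((Real.sqrt_lt' four_pos).2 (by linarith))
  have hsqrt : 0 < Real.sqrt (2 * (n : ℝ) - 4) := by linarith
  rw [bC_eq (by omega)]
  positivity

lemma aC_mul_sq_add_bC_pos (hn : 4 < n) (hn' : n < 10) (r : ℝ) : 0 < aC n * r ^ 2 + bC n := by
  have ha : 0 ≤ aC n := by linarith [one_le_two_mul_aC hn.le]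
  have hb := bC_pos hn hn'
  positivity

lemma two_mul_aC_sub_one_mul_sq_add_two_mul_bC_pos (hn : 4 < n) (hn' : n < 10) (r : ℝ) :
    0 < (2 * aC n - 1) * r ^ 2 + 2 * bC n := by
  have ha : 0 ≤ 2 * aC n - 1 := sub_nonneg.2 (one_le_two_mul_aC hn.le)
  have hb := bC_pos hn hn'
  positivity

end

theorem curvature_at_minus_Re1_general {n : ℕ} {i j : Fin n} (hij : i ≠ j) {y : En n}
    (hi : y i = 0) (hj : y j = 0) (hD : aC n * ‖y‖ ^ 2 + bC n ≠ 0) :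
    fnormE (Fc i j y)
      = Real.sqrt 2 * |(2 * aC n - 1) * ‖y‖ ^ 2 + 2 * bC n| / (aC n * ‖y‖ ^ 2 + bC n) ^ 2 := by
  rw [Fc_eq hD, hi, hj, zero_smul, zero_smul, sub_zero, smul_zero, sub_zero, fnormE_smul,
    fnormE_wedge_single hij, abs_div, abs_of_nonneg (sq_nonneg (aC n * ‖y‖ ^ 2 + bC n))]
  ring

/-- For every `R > 0`, the curvature component `F_{23}` of the soliton connection `W`
(indices `2` and `3` in one-based numbering, i.e. `⟨1,_⟩` and `⟨2,_⟩` in `Fin n`) evaluated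
at `−R·e₁` has Frobenius norm `√2·((2a − 1)R² + 2b)/(aR² + b)²`. -/
theorem curvature_at_minus_Re1 (n : ℕ) (hn : 5 ≤ n) (hn' : n ≤ 9) (R : ℝ) (hR : 0 < R) :
    fnormE (Fc (⟨1, by omega⟩ : Fin n) (⟨2, by omega⟩ : Fin n)
        (EuclideanSpace.single (⟨0, by omega⟩ : Fin n) (-R)))
      = Real.sqrt 2 * ((2 * aC n - 1) * R ^ 2 + 2 * bC n) / (aC n * R ^ 2 + bC n) ^ 2 := by
  rw [curvature_at_minus_Re1_general (by simp) (by simp) (by simp)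
      (aC_mul_sq_add_bC_pos hn (by omega) _).ne',
    abs_of_pos (two_mul_aC_sub_one_mul_sq_add_two_mul_bC_pos hn (by omega) _),
    PiLp.norm_single, norm_neg, Real.norm_eq_abs, sq_abs]
end
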